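/- Let d_1 ≤ d_2 be positive integers, let A_1, A_2 > 0, let S(q) = A_1 e^{−q_1} + A_2 e^{−q_2}, and let H be the associated Ricci-flat cohomogeneity one Hamiltonian on ℝ²×ℝ². Then there exist C¹ functions F_1, F_2, F_0 on ℝ², with F_1 and F_2 not both identically zero, such that F(q,p) := F_1(q)p_1 + F_2(q)p_2 + F_0(q) satisfies {F,H} = 0 at every point of V_H, if and only if d_1 = d_2 = 5. -/

import Mathlib

/-- Partial derivative in the `i`-th `q`-coordinate. -/
noncomputable def pderivQ (F : (Fin 2 → ℝ) → (Fin 2 → ℝ) → ℝ) (i : Fin 2)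
    (q p : Fin 2 → ℝ) : ℝ :=
  deriv (fun t => F (Function.update q i t) p) (q i)

/-- Partial derivative in the `i`-th `p`-coordinate. -/
noncomputable def pderivP (F : (Fin 2 → ℝ) → (Fin 2 → ℝ) → ℝ) (i : Fin 2)
    (q p : Fin 2 → ℝ) : ℝ :=
  deriv (fun t => F q (Function.update p i t)) (p i)

/-- Canonical Poisson bracket on `ℝ² × ℝ²`. -/
noncomputable def poisson (F G : (Fin 2 → ℝ) → (Fin 2 → ℝ) → ℝ) (q p : Fin 2 → ℝ) : ℝ :=
  ∑ i : Fin 2, (pderivQ F i q p * pderivP G i q p - pderivP F i q p * pderivQ G i q p)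

/-- Relative volume `v(q) = exp((d₁q₁ + d₂q₂)/2)`. -/
noncomputable def vol (d1 d2 : ℕ) (q : Fin 2 → ℝ) : ℝ :=
  Real.exp (((d1 : ℝ) * q 0 + (d2 : ℝ) * q 1) / 2)

/-- The quadratic form `J(p) = (p₁+p₂)²/(n−1) − p₁²/d₁ − p₂²/d₂`, `n = d₁+d₂`. -/
noncomputable def Jform (d1 d2 : ℕ) (p : Fin 2 → ℝ) : ℝ :=
  (1 / ((d1 : ℝ) + (d2 : ℝ) - 1)) * (p 0 + p 1) ^ 2 - (p 0) ^ 2 / (d1 : ℝ) -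
    (p 1) ^ 2 / (d2 : ℝ)

/-- The Ricci-flat cohomogeneity one Hamiltonian `H(q,p) = v(q)⁻¹ J(p) − S(q) v(q)`. -/
noncomputable def Ham (d1 d2 : ℕ) (S : (Fin 2 → ℝ) → ℝ) (q p : Fin 2 → ℝ) : ℝ :=
  (vol d1 d2 q)⁻¹ * Jform d1 d2 p - S q * vol d1 d2 q

/-- A separated functional equation with exponential coefficients forces the difference of the
two unknown functions of `x` to be a combination of `1`, `exp (-α x)` and `exp (α x)`. -/
lemma exists_exp_combination {P R Q T : ℝ → ℝ} {α β κ : ℝ} (hβ : β ≠ 0) (hκ : κ ≠ 0)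
    (h : ∀ x y, P x + Q y + κ * (Real.exp (α * x) * Real.exp (β * y)) * (R x + T y) = 0) :
    ∃ c0 c1 c2 : ℝ, ∀ x,
      R x - P x = c0 + c1 * Real.exp (-(α * x)) + c2 * Real.exp (α * x) := by
  set Y := Real.exp β with hYdef
  have hY : 1 - Y ≠ 0 := by
    intro h1
    exact hβ (Real.exp_eq_one_iff β |>.1 (by linarith))
  set r1 := (Q 1 - Q 0) / (κ * (1 - Y)) with hr1
  set r0 := (Y * T 1 - T 0) / (1 - Y) with hr0
  refine ⟨r0 + Q 0 + κ * r1, r1, κ * (r0 + T 0), fun x => ?_⟩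
  have h0 := h x 0
  have h1 := h x 1
  simp only [mul_zero, Real.exp_zero, mul_one] at h0 h1
  rw [← hYdef] at h1
  rw [Real.exp_neg]
  have hX := Real.exp_pos (α * x)
  set X := Real.exp (α * x)
  have hR : R x = r0 + r1 * X⁻¹ := by
    rw [hr0, hr1]
    field_simp
    linear_combination h0 - h1
  have hP : P x = -Q 0 - κ * X * (R x + T 0) := by linear_combination h0
  rw [hP, hR]
  field_simp
  ring

/-- A polynomial with the given support that vanishes on the positive quadrant is zero. -/
lemma coeffs_eq_zero {m1 m2 m3 m4 m5 m6 m7 m8 : ℝ}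
    (h : ∀ X Y : ℝ, 0 < X → 0 < Y →
      m1 * (X * Y) + m2 * Y + m3 * X + m4 * (X ^ 2 * Y) + m5 * (X * Y ^ 2) +
        m6 * (X ^ 2 * Y ^ 2) + m7 * (X ^ 3 * Y ^ 2) + m8 * (X ^ 2 * Y ^ 3) = 0) :
    m1 = 0 ∧ m2 = 0 ∧ m3 = 0 ∧ m4 = 0 ∧ m5 = 0 ∧ m6 = 0 ∧ m7 = 0 ∧ m8 = 0 := by
  have hY : ∀ X : ℝ, 0 < X → m3 * X = 0 ∧ m1 * X + m2 + m4 * X ^ 2 = 0 ∧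
      m5 * X + m6 * X ^ 2 + m7 * X ^ 3 = 0 ∧ m8 * X ^ 2 = 0 := by
    intro X hX
    have h1 := h X 1 hX one_pos
    have h2 := h X 2 hX two_pos
    have h3 := h X 3 hX three_pos
    have h4 := h X 4 hX four_pos
    refine ⟨?_, ?_, ?_, ?_⟩ <;> linarith
  obtain ⟨p1, q1, r1, s1⟩ := hY 1 one_pos
  obtain ⟨p2, q2, r2, s2⟩ := hY 2 two_pos
  obtain ⟨p3, q3, r3, s3⟩ := hY 3 three_pos
  refine ⟨?_, ?_, ?_, ?_, ?_, ?_, ?_, ?_⟩ <;> linarith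

/-- The exponents admitting a nontrivial conformal symmetry of a sum of two exponentials. -/
lemma exponents_of_conformal_symmetry {f g f' g' : ℝ → ℝ} {a1 a2 b1 b2 B1 B2 : ℝ}
    (hf : ∀ x, HasDerivAt f (f' x) x) (hg : ∀ y, HasDerivAt g (g' y) y)
    (hB1 : 0 < B1) (hB2 : 0 < B2) (ha : a1 ≠ a2) (hb : b1 ≠ b2)
    (hdet : a1 * b2 ≠ a2 * b1)
    (h : ∀ x y, B1 * Real.exp (a1 * x + b1 * y) * (f' x + a1 * f x + (g' y + b1 * g y)) +
      B2 * Real.exp (a2 * x + b2 * y) * (f' x + a2 * f x + (g' y + b2 * g y)) = 0)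
    (hne : (∃ x, f x ≠ 0) ∨ ∃ y, g y ≠ 0) :
    (a1 = 2 * a2 ∧ b2 = 2 * b1) ∨ (a2 = 2 * a1 ∧ b1 = 2 * b2) := by
  obtain ⟨α, rfl⟩ : ∃ α, a2 = a1 + α := ⟨a2 - a1, by ring⟩
  obtain ⟨β, rfl⟩ : ∃ β, b2 = b1 + β := ⟨b2 - b1, by ring⟩
  have hα : α ≠ 0 := fun h0 => ha (by rw [h0, add_zero])
  have hβ : β ≠ 0 := fun h0 => hb (by rw [h0, add_zero])
  obtain ⟨κ, hκ, rfl⟩ : ∃ κ, 0 < κ ∧ B2 = B1 * κ := ⟨B2 / B1, by positivity, by field_simp⟩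
  have key : ∀ x y, (f' x + a1 * f x) + (g' y + b1 * g y) +
      κ * (Real.exp (α * x) * Real.exp (β * y)) *
        ((f' x + (a1 + α) * f x) + (g' y + (b1 + β) * g y)) = 0 := by
    intro x y
    have h1 := h x y
    have he : (a1 + α) * x + (b1 + β) * y = (a1 * x + b1 * y) + (α * x + β * y) := by ring
    rw [he, Real.exp_add (a1 * x + b1 * y), Real.exp_add (α * x)] at h1
    have hpos : B1 * Real.exp (a1 * x + b1 * y) ≠ 0 := by positivity
    refine (mul_eq_zero.1 ?_).resolve_left hpos
    linear_combination h1
  obtain ⟨c0, c1, c2, hc⟩ := exists_exp_combination hβ hκ.ne' key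
  obtain ⟨e0, e1, e2, he⟩ := exists_exp_combination (P := fun y => g' y + b1 * g y)
    (R := fun y => g' y + (b1 + β) * g y) (Q := fun x => f' x + a1 * f x)
    (T := fun x => f' x + (a1 + α) * f x) (α := β) (β := α) hα hκ.ne'
    (fun y x => by linear_combination key x y)
  have exp_deriv : ∀ γ t : ℝ, HasDerivAt (fun t => Real.exp (γ * t)) (γ * Real.exp (γ * t)) t := by
    intro γ t
    simpa [mul_comm] using ((hasDerivAt_id t).const_mul γ).exp
  have shape : ∀ {u u' : ℝ → ℝ} {γ k0 k1 k2 : ℝ}, γ ≠ 0 → (∀ t, HasDerivAt u (u' t) t) →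
      (∀ t, γ * u t = k0 + k1 * Real.exp (-(γ * t)) + k2 * Real.exp (γ * t)) →
      ∀ t, u' t = -k1 * Real.exp (-(γ * t)) + k2 * Real.exp (γ * t) := by
    intro u u' γ k0 k1 k2 hγ hu hk t
    have h1 := (hu t).const_mul γ
    have h2 : HasDerivAt (fun t => γ * u t)
        (k1 * (-γ * Real.exp (-γ * t)) + k2 * (γ * Real.exp (γ * t))) t := by
      have := (((exp_deriv (-γ) t).const_mul k1).const_add k0).add ((exp_deriv γ t).const_mul k2)
      refine this.congr_of_eventuallyEq (Filter.Eventually.of_forall fun s => ?_)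
      simp only [hk, Pi.add_apply, neg_mul]
    have h3 := h1.unique h2
    simp only [neg_mul] at h3
    refine mul_left_cancel₀ hγ ?_
    rw [h3]
    ring
  have hf1 : ∀ x, α * f x = c0 + c1 * Real.exp (-(α * x)) + c2 * Real.exp (α * x) :=
    fun x => by rw [← hc x]; ring
  have hg1 : ∀ y, β * g y = e0 + e1 * Real.exp (-(β * y)) + e2 * Real.exp (β * y) :=
    fun y => by rw [← he y]; ring
  have hf2 := shape hα hf hf1
  have hg2 := shape hβ hg hg1
  have poly : ∀ X Y : ℝ, 0 < X → 0 < Y →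
      (a1 * β * c0 + b1 * α * e0) * (X * Y) + (a1 - α) * β * c1 * Y + (b1 - β) * α * e1 * X
      + ((a1 + α) * β * c2 + κ * b1 * α * e1) * (X ^ 2 * Y)
      + ((b1 + β) * α * e2 + κ * a1 * β * c1) * (X * Y ^ 2)
      + κ * ((a1 + α) * β * c0 + (b1 + β) * α * e0) * (X ^ 2 * Y ^ 2)
      + κ * (a1 + 2 * α) * β * c2 * (X ^ 3 * Y ^ 2)
      + κ * (b1 + 2 * β) * α * e2 * (X ^ 2 * Y ^ 3) = 0 := by
    intro X Y hX hY
    have hXx : Real.exp (α * (Real.log X / α)) = X := by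
      rw [mul_div_cancel₀ _ hα, Real.exp_log hX]
    have hYy : Real.exp (β * (Real.log Y / β)) = Y := by
      rw [mul_div_cancel₀ _ hβ, Real.exp_log hY]
    have k := key (Real.log X / α) (Real.log Y / β)
    have f1 := hf1 (Real.log X / α)
    have f2 := hf2 (Real.log X / α)
    have g1 := hg1 (Real.log Y / β)
    have g2 := hg2 (Real.log Y / β)
    rw [Real.exp_neg, hXx] at f1 f2
    rw [Real.exp_neg, hYy] at g1 g2
    rw [hXx, hYy, f2, g2] at k
    generalize f (Real.log X / α) = fx at *
    generalize g (Real.log Y / β) = gy at *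
    obtain rfl := (eq_div_iff hα).2 ((mul_comm fx α).trans f1)
    obtain rfl := (eq_div_iff hβ).2 ((mul_comm gy β).trans g1)
    field_simp at k
    linear_combination k
  obtain ⟨hXY, hY, hX, hXXY, hXYY, hXXYY, hXXXYY, hXXYYY⟩ := coeffs_eq_zero poly
  have hD : a1 * (b1 + β) - (a1 + α) * b1 ≠ 0 := sub_ne_zero.2 hdet
  have hc0 : c0 = 0 := by
    have h1 : β * (κ * (c0 * (a1 * (b1 + β) - (a1 + α) * b1))) = 0 := by
      linear_combination κ * (b1 + β) * hXY - b1 * hXXYY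
    simpa [hβ, hκ.ne', hD] using h1
  have he0 : e0 = 0 := by
    have h1 : α * (κ * (e0 * (a1 * (b1 + β) - (a1 + α) * b1))) = 0 := by
      linear_combination a1 * hXXYY - κ * (a1 + α) * hXY
    simpa [hα, hκ.ne', hD] using h1
  by_cases hce : c1 = 0 ∧ e1 = 0
  · obtain ⟨rfl, rfl⟩ := hce
    have hc2 : c2 = 0 := by
      by_contra hc2
      have h1 : a1 + α = 0 := by simpa [hβ, hc2] using hXXY
      have h2 : a1 + 2 * α = 0 := by simpa [hκ.ne', hβ, hc2] using hXXXYY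
      exact hα (by linarith)
    have he2 : e2 = 0 := by
      by_contra he2
      have h1 : b1 + β = 0 := by simpa [hα, he2] using hXYY
      have h2 : b1 + 2 * β = 0 := by simpa [hκ.ne', hα, he2] using hXXYYY
      exact hβ (by linarith)
    exfalso
    rcases hne with ⟨x, hx⟩ | ⟨y, hy⟩
    · have := hf1 x
      simp [hc0, hc2, hα, hx] at this
    · have := hg1 y
      simp [he0, he2, hβ, hy] at this
  · rcases not_and_or.1 hce with hc1 | he1
    · right
      have h1 : a1 = α := by simpa [hβ, hc1, sub_eq_zero] using hY
      have he2 : e2 ≠ 0 := by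
        rintro rfl
        simp [hκ.ne', hβ, hc1, h1, hα] at hXYY
      have h2 : b1 + 2 * β = 0 := by simpa [hκ.ne', hα, he2] using hXXYYY
      exact ⟨by linarith, by linarith⟩
    · left
      have h1 : b1 = β := by simpa [hα, he1, sub_eq_zero] using hX
      have hc2 : c2 ≠ 0 := by
        rintro rfl
        simp [hκ.ne', hβ, he1, h1, hα] at hXXY
      have h2 : a1 + 2 * α = 0 := by simpa [hκ.ne', hβ, hc2] using hXXXYY
      exact ⟨by linarith, by linarith⟩

lemma hasDerivAt_comp_update {F : (Fin 2 → ℝ) → ℝ} {q : Fin 2 → ℝ}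
    (hF : DifferentiableAt ℝ F q) (i : Fin 2) :
    HasDerivAt (fun t => F (Function.update q i t)) (fderiv ℝ F q (Pi.single i 1)) (q i) := by
  have h : HasFDerivAt F (fderiv ℝ F q) (Function.update q i (q i)) := by
    rw [Function.update_eq_self]; exact hF.hasFDerivAt
  exact h.comp_hasDerivAt (q i) (hasDerivAt_update q i (q i))

/-- On the zero level of the Hamiltonian, `v` times the bracket with a function linear in the
momenta is a polynomial in `p` built from the derivatives of its coefficients. -/
lemma vol_mul_poisson_linear (d1 d2 : ℕ) (A1 A2 : ℝ)
    {F1 F2 F0 : (Fin 2 → ℝ) → ℝ} {q : Fin 2 → ℝ} (p : Fin 2 → ℝ)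
    (h1 : DifferentiableAt ℝ F1 q) (h2 : DifferentiableAt ℝ F2 q)
    (h0 : DifferentiableAt ℝ F0 q)
    (hH : Ham d1 d2 (fun q => A1 * Real.exp (-(q 0)) + A2 * Real.exp (-(q 1))) q p = 0) :
    vol d1 d2 q * poisson (fun q' p' => F1 q' * p' 0 + F2 q' * p' 1 + F0 q')
      (Ham d1 d2 (fun q => A1 * Real.exp (-(q 0)) + A2 * Real.exp (-(q 1)))) q p =
    (fderiv ℝ F1 q (Pi.single 0 1) * p 0 + fderiv ℝ F2 q (Pi.single 0 1) * p 1 +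
        fderiv ℝ F0 q (Pi.single 0 1)) *
      (2 * (p 0 + p 1) / ((d1 : ℝ) + d2 - 1) - 2 * p 0 / d1) +
    (fderiv ℝ F1 q (Pi.single 1 1) * p 0 + fderiv ℝ F2 q (Pi.single 1 1) * p 1 +
        fderiv ℝ F0 q (Pi.single 1 1)) *
      (2 * (p 0 + p 1) / ((d1 : ℝ) + d2 - 1) - 2 * p 1 / d2) +
    F1 q * (A1 * ((d1 : ℝ) - 1) * Real.exp ((d1 - 1) * q 0 + d2 * q 1) +
      A2 * d1 * Real.exp (d1 * q 0 + (d2 - 1) * q 1)) +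
    F2 q * (A1 * d2 * Real.exp ((d1 - 1) * q 0 + d2 * q 1) +
      A2 * ((d2 : ℝ) - 1) * Real.exp (d1 * q 0 + (d2 - 1) * q 1)) := by
  have hQ : ∀ i, pderivQ (fun q' p' => F1 q' * p' 0 + F2 q' * p' 1 + F0 q') i q p =
      fderiv ℝ F1 q (Pi.single i 1) * p 0 + fderiv ℝ F2 q (Pi.single i 1) * p 1 +
        fderiv ℝ F0 q (Pi.single i 1) := fun i =>
    ((((hasDerivAt_comp_update h1 i).mul_const (p 0)).add
      ((hasDerivAt_comp_update h2 i).mul_const (p 1))).add (hasDerivAt_comp_update h0 i)).deriv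
  have hP0 : pderivP (fun q' p' => F1 q' * p' 0 + F2 q' * p' 1 + F0 q') 0 q p = F1 q := by
    simp [pderivP]
  have hP1 : pderivP (fun q' p' => F1 q' * p' 0 + F2 q' * p' 1 + F0 q') 1 q p = F2 q := by
    simp [pderivP]
  have hv : 0 < vol d1 d2 q := Real.exp_pos _
  have hHP0 : pderivP (Ham d1 d2 (fun q => A1 * Real.exp (-(q 0)) + A2 * Real.exp (-(q 1)))) 0 q p
      = (vol d1 d2 q)⁻¹ * (2 * (p 0 + p 1) / ((d1 : ℝ) + d2 - 1) - 2 * p 0 / d1) := by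
    have e : HasDerivAt (fun t : ℝ => (vol d1 d2 q)⁻¹ *
        ((1 / ((d1 : ℝ) + d2 - 1)) * (t + p 1) ^ 2 - t ^ 2 / d1 - p 1 ^ 2 / d2) -
        (A1 * Real.exp (-(q 0)) + A2 * Real.exp (-(q 1))) * vol d1 d2 q) _ (p 0) :=
      ((((((((hasDerivAt_id (p 0)).add_const (p 1)).pow 2).const_mul _).sub
        (((hasDerivAt_id (p 0)).pow 2).div_const _)).sub_const _).const_mul _).sub_const _)
    simp only [pderivP, Ham, Jform, Function.update_self, Function.update_of_ne, ne_eq,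
      one_ne_zero, not_false_eq_true]
    rw [e.deriv]
    simp only [id_eq, Nat.cast_ofNat, Nat.add_one_sub_one, pow_one, mul_one]
    ring
  have hHP1 : pderivP (Ham d1 d2 (fun q => A1 * Real.exp (-(q 0)) + A2 * Real.exp (-(q 1)))) 1 q p
      = (vol d1 d2 q)⁻¹ * (2 * (p 0 + p 1) / ((d1 : ℝ) + d2 - 1) - 2 * p 1 / d2) := by
    have e : HasDerivAt (fun t : ℝ => (vol d1 d2 q)⁻¹ *
        ((1 / ((d1 : ℝ) + d2 - 1)) * (p 0 + t) ^ 2 - p 0 ^ 2 / d1 - t ^ 2 / d2) -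
        (A1 * Real.exp (-(q 0)) + A2 * Real.exp (-(q 1))) * vol d1 d2 q) _ (p 1) :=
      (((((((hasDerivAt_id (p 1)).const_add (p 0)).pow 2).const_mul _).sub_const _).sub
        (((hasDerivAt_id (p 1)).pow 2).div_const _)).const_mul _).sub_const _
    simp only [pderivP, Ham, Jform, Function.update_self, Function.update_of_ne, ne_eq,
      zero_ne_one, not_false_eq_true]
    rw [e.deriv]
    simp only [id_eq, Nat.cast_ofNat, Nat.add_one_sub_one, pow_one, mul_one]
    ring
  have hHQ0 : pderivQ (Ham d1 d2 (fun q => A1 * Real.exp (-(q 0)) + A2 * Real.exp (-(q 1)))) 0 q p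
      = -(d1 / 2 * (vol d1 d2 q)⁻¹ * Jform d1 d2 p) + A1 * Real.exp (-(q 0)) * vol d1 d2 q -
        (A1 * Real.exp (-(q 0)) + A2 * Real.exp (-(q 1))) * (d1 / 2 * vol d1 d2 q) := by
    have ev : HasDerivAt (fun t : ℝ => Real.exp (((d1 : ℝ) * t + d2 * q 1) / 2))
        _ (q 0) := ((((hasDerivAt_id (q 0)).const_mul _).add_const _).div_const 2).exp
    have e := ((ev.inv (Real.exp_pos _).ne').mul_const (Jform d1 d2 p)).sub
      ((((((hasDerivAt_id (q 0)).neg).exp).const_mul A1).add_const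
        (A2 * Real.exp (-(q 1)))).mul ev)
    have e' := e.deriv
    simp only [pderivQ, Ham, vol, Function.update_self, Function.update_of_ne, ne_eq,
      one_ne_zero, not_false_eq_true]
    refine e'.trans ?_
    simp
    field_simp
    ring
  have hHQ1 : pderivQ (Ham d1 d2 (fun q => A1 * Real.exp (-(q 0)) + A2 * Real.exp (-(q 1)))) 1 q p
      = -(d2 / 2 * (vol d1 d2 q)⁻¹ * Jform d1 d2 p) + A2 * Real.exp (-(q 1)) * vol d1 d2 q -
        (A1 * Real.exp (-(q 0)) + A2 * Real.exp (-(q 1))) * (d2 / 2 * vol d1 d2 q) := by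
    have ev : HasDerivAt (fun t : ℝ => Real.exp (((d1 : ℝ) * q 0 + d2 * t) / 2))
        _ (q 1) := ((((hasDerivAt_id (q 1)).const_mul _).const_add _).div_const 2).exp
    have e := ((ev.inv (Real.exp_pos _).ne').mul_const (Jform d1 d2 p)).sub
      ((((((hasDerivAt_id (q 1)).neg).exp).const_mul A2).const_add
        (A1 * Real.exp (-(q 0)))).mul ev)
    have e' := e.deriv
    simp only [pderivQ, Ham, vol, Function.update_self, Function.update_of_ne, ne_eq,
      zero_ne_one, not_false_eq_true]
    refine e'.trans ?_
    simp
    field_simp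
    ring
  have hE1 : Real.exp ((d1 - 1) * q 0 + d2 * q 1) = vol d1 d2 q ^ 2 * Real.exp (-(q 0)) := by
    rw [vol, ← Real.exp_nat_mul, ← Real.exp_add]; congr 1; push_cast; ring
  have hE2 : Real.exp (d1 * q 0 + (d2 - 1) * q 1) = vol d1 d2 q ^ 2 * Real.exp (-(q 1)) := by
    rw [vol, ← Real.exp_nat_mul, ← Real.exp_add]; congr 1; push_cast; ring
  rw [poisson, Fin.sum_univ_two, hQ, hQ, hP0, hP1, hHP0, hHP1, hHQ0, hHQ1, hE1, hE2]
  have hJ : (vol d1 d2 q)⁻¹ * Jform d1 d2 p =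
      (A1 * Real.exp (-(q 0)) + A2 * Real.exp (-(q 1))) * vol d1 d2 q := sub_eq_zero.1 hH
  have hvi : vol d1 d2 q * (vol d1 d2 q)⁻¹ = 1 := mul_inv_cancel₀ hv.ne'
  generalize vol d1 d2 q = v at *
  generalize v⁻¹ = w at *
  generalize Jform d1 d2 p = J at *
  generalize Real.exp (-(q 0)) = x at *
  generalize Real.exp (-(q 1)) = y at *
  generalize 2 * (p 0 + p 1) / ((d1 : ℝ) + d2 - 1) - 2 * p 0 / d1 = j0 at *
  generalize 2 * (p 0 + p 1) / ((d1 : ℝ) + d2 - 1) - 2 * p 1 / d2 = j1 at *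
  generalize fderiv ℝ F1 q (Pi.single 0 1) * p 0 + fderiv ℝ F2 q (Pi.single 0 1) * p 1 +
        fderiv ℝ F0 q (Pi.single 0 1) = k0 at *
  generalize fderiv ℝ F1 q (Pi.single 1 1) * p 0 + fderiv ℝ F2 q (Pi.single 1 1) * p 1 +
        fderiv ℝ F0 q (Pi.single 1 1) = k1 at *
  linear_combination (k0 * j0 + k1 * j1) * hvi + v * (F1 q * d1 / 2 + F2 q * d2 / 2) * hJ

/-- The quadratic form factors into two independent linear forms. -/
lemma exists_null_frame {d1 d2 : ℕ} (hd1 : 0 < d1) (hd2 : 0 < d2) :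
    ∃ L M : Fin 2 → ℝ, L 0 * M 1 - L 1 * M 0 ≠ 0 ∧
      1 / ((d1 : ℝ) + d2 - 1) - 1 / d1 = L 0 * M 0 ∧
      1 / ((d1 : ℝ) + d2 - 1) - 1 / d2 = L 1 * M 1 ∧
      2 / ((d1 : ℝ) + d2 - 1) = L 0 * M 1 + L 1 * M 0 := by
  have h1 : (1 : ℝ) ≤ d1 := by exact_mod_cast hd1
  have h2 : (1 : ℝ) ≤ d2 := by exact_mod_cast hd2
  generalize (d1 : ℝ) = x at *
  generalize (d2 : ℝ) = y at *
  have hn : 0 < x + y - 1 := by linarith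
  have hx : 0 < x := by linarith
  have hy : 0 < y := by linarith
  have ha : 0 < 1 / ((x + y) * (x + y - 1)) := by positivity
  have hb : 0 < 1 / ((x + y) * (x * y)) := by positivity
  obtain ⟨a, ha0, ha2⟩ : ∃ a : ℝ, 0 < a ∧ a ^ 2 = 1 / ((x + y) * (x + y - 1)) :=
    ⟨_, Real.sqrt_pos.2 ha, Real.sq_sqrt ha.le⟩
  obtain ⟨b, hb0, hb2⟩ : ∃ b : ℝ, 0 < b ∧ b ^ 2 = 1 / ((x + y) * (x * y)) :=
    ⟨_, Real.sqrt_pos.2 hb, Real.sq_sqrt hb.le⟩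
  refine ⟨![a - b * y, a + b * x], ![a + b * y, a - b * x], ?_, ?_, ?_, ?_⟩ <;>
    simp only [Matrix.cons_val_zero, Matrix.cons_val_one]
  · have : 0 < a * b * (x + y) := by positivity
    intro h
    linarith
  · rw [show (a - b * y) * (a + b * y) = a ^ 2 - b ^ 2 * y ^ 2 by ring, ha2, hb2]
    field_simp
    ring
  · rw [show (a + b * x) * (a - b * x) = a ^ 2 - b ^ 2 * x ^ 2 by ring, ha2, hb2]
    field_simp
    ring
  · rw [show (a - b * y) * (a - b * x) + (a + b * x) * (a + b * y) =
      2 * a ^ 2 + 2 * b ^ 2 * (x * y) by ring, ha2, hb2]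
    field_simp
    ring

lemma clm_apply_eq_single (φ : (Fin 2 → ℝ) →L[ℝ] ℝ) (w : Fin 2 → ℝ) :
    φ w = w 0 * φ (Pi.single 0 1) + w 1 * φ (Pi.single 1 1) := by
  have h : w = w 0 • (Pi.single 0 1 : Fin 2 → ℝ) + w 1 • (Pi.single 1 1 : Fin 2 → ℝ) := by
    ext i; fin_cases i <;> simp
  conv_lhs => rw [h]
  simp only [map_add, map_smul, smul_eq_mul]

/-- In a null frame `L`, `M`, a first integral on the zero level with linear part
`f L + g M` has `f` constant along `M`, `g` constant along `L`, and `f L + g M` preserves the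
density `v² S`. -/
lemma null_frame_equations {d1 d2 : ℕ} {A1 A2 : ℝ} (hA1 : 0 < A1) (hA2 : 0 < A2)
    {L M : Fin 2 → ℝ} (hD : L 0 * M 1 - L 1 * M 0 ≠ 0)
    (h00 : 1 / ((d1 : ℝ) + d2 - 1) - 1 / d1 = L 0 * M 0)
    (h11 : 1 / ((d1 : ℝ) + d2 - 1) - 1 / d2 = L 1 * M 1)
    (h01 : 2 / ((d1 : ℝ) + d2 - 1) = L 0 * M 1 + L 1 * M 0)
    {f g F0 : (Fin 2 → ℝ) → ℝ} {q : Fin 2 → ℝ}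
    (hf : DifferentiableAt ℝ f q) (hg : DifferentiableAt ℝ g q)
    (h0 : DifferentiableAt ℝ F0 q)
    (h : ∀ p, Ham d1 d2 (fun q => A1 * Real.exp (-(q 0)) + A2 * Real.exp (-(q 1))) q p = 0 →
      poisson (fun q' p' => (L 0 * f q' + M 0 * g q') * p' 0 + (L 1 * f q' + M 1 * g q') * p' 1
        + F0 q') (Ham d1 d2 (fun q => A1 * Real.exp (-(q 0)) + A2 * Real.exp (-(q 1)))) q p = 0) :
    fderiv ℝ f q M = 0 ∧ fderiv ℝ g q L = 0 ∧
    A1 * Real.exp ((d1 - 1) * q 0 + d2 * q 1) *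
      (fderiv ℝ f q L + ((d1 - 1) * L 0 + d2 * L 1) * f q +
        (fderiv ℝ g q M + ((d1 - 1) * M 0 + d2 * M 1) * g q)) +
    A2 * Real.exp (d1 * q 0 + (d2 - 1) * q 1) *
      (fderiv ℝ f q L + (d1 * L 0 + (d2 - 1) * L 1) * f q +
        (fderiv ℝ g q M + (d1 * M 0 + (d2 - 1) * M 1) * g q)) = 0 := by
  have hlin : ∀ (i : Fin 2), DifferentiableAt ℝ (fun q => L i * f q + M i * g q) q ∧
      ∀ e, fderiv ℝ (fun q => L i * f q + M i * g q) q e =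
        L i * fderiv ℝ f q e + M i * fderiv ℝ g q e := by
    intro i
    have := (hf.hasFDerivAt.const_mul (L i)).add (hg.hasFDerivAt.const_mul (M i))
    refine ⟨this.differentiableAt, fun e => ?_⟩
    rw [show fderiv ℝ (fun q => L i * f q + M i * g q) q = _ from this.fderiv]
    simp
  have hE1 : Real.exp ((d1 - 1) * q 0 + d2 * q 1) = vol d1 d2 q ^ 2 * Real.exp (-(q 0)) := by
    rw [vol, ← Real.exp_nat_mul, ← Real.exp_add]; congr 1; push_cast; ring
  have hE2 : Real.exp (d1 * q 0 + (d2 - 1) * q 1) = vol d1 d2 q ^ 2 * Real.exp (-(q 1)) := by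
    rw [vol, ← Real.exp_nat_mul, ← Real.exp_add]; congr 1; push_cast; ring
  have hv : 0 < vol d1 d2 q := Real.exp_pos _
  obtain ⟨W, hW⟩ : ∃ W, W = A1 * Real.exp ((d1 - 1) * q 0 + d2 * q 1) +
    A2 * Real.exp (d1 * q 0 + (d2 - 1) * q 1) := ⟨_, rfl⟩
  have hWpos : 0 < W := by rw [hW]; positivity
  set D := L 0 * M 1 - L 1 * M 0 with hDdef
  rw [clm_apply_eq_single _ L, clm_apply_eq_single _ M, clm_apply_eq_single _ L,
    clm_apply_eq_single _ M]
  have key : ∀ s : ℝ, s ≠ 0 →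
      (M 0 * fderiv ℝ f q (Pi.single 0 1) + M 1 * fderiv ℝ f q (Pi.single 1 1)) * s ^ 4 +
      (M 0 * fderiv ℝ F0 q (Pi.single 0 1) + M 1 * fderiv ℝ F0 q (Pi.single 1 1)) * s ^ 3 +
      (A1 * Real.exp ((d1 - 1) * q 0 + d2 * q 1) *
        (L 0 * fderiv ℝ f q (Pi.single 0 1) + L 1 * fderiv ℝ f q (Pi.single 1 1)
          + ((d1 - 1) * L 0 + d2 * L 1) * f q +
          (M 0 * fderiv ℝ g q (Pi.single 0 1) + M 1 * fderiv ℝ g q (Pi.single 1 1)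
          + ((d1 - 1) * M 0 + d2 * M 1) * g q)) +
      A2 * Real.exp (d1 * q 0 + (d2 - 1) * q 1) *
        (L 0 * fderiv ℝ f q (Pi.single 0 1) + L 1 * fderiv ℝ f q (Pi.single 1 1)
          + (d1 * L 0 + (d2 - 1) * L 1) * f q +
          (M 0 * fderiv ℝ g q (Pi.single 0 1) + M 1 * fderiv ℝ g q (Pi.single 1 1)
          + (d1 * M 0 + (d2 - 1) * M 1) * g q))) * s ^ 2 +
      W * (L 0 * fderiv ℝ F0 q (Pi.single 0 1) + L 1 * fderiv ℝ F0 q (Pi.single 1 1)) * s +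
      W ^ 2 * (L 0 * fderiv ℝ g q (Pi.single 0 1) + L 1 * fderiv ℝ g q (Pi.single 1 1)) = 0 := by
    intro s hs
    obtain ⟨t, ht⟩ : ∃ t, s * t = W := ⟨W / s, by field_simp⟩
    obtain ⟨p, hs', ht'⟩ : ∃ p : Fin 2 → ℝ, L 0 * p 0 + L 1 * p 1 = s ∧
        M 0 * p 0 + M 1 * p 1 = t := by
      refine ⟨![(s * M 1 - t * L 1) / D, (L 0 * t - M 0 * s) / D], ?_, ?_⟩ <;>
        simp only [Matrix.cons_val_zero, Matrix.cons_val_one] <;> field_simp <;>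
        rw [hDdef] <;> ring
    have hJ : Jform d1 d2 p = s * t := by
      rw [Jform, ← hs', ← ht']
      linear_combination p 0 ^ 2 * h00 + p 1 ^ 2 * h11 + p 0 * p 1 * h01
    have hH : Ham d1 d2 (fun q => A1 * Real.exp (-(q 0)) + A2 * Real.exp (-(q 1))) q p = 0 := by
      rw [Ham, hJ, ht, hW, hE1, hE2]
      field_simp
      ring
    have hp := vol_mul_poisson_linear d1 d2 A1 A2 p (hlin 0).1 (hlin 1).1 h0 hH
    rw [h p hH, mul_zero, (hlin 0).2, (hlin 0).2, (hlin 1).2, (hlin 1).2] at hp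
    have hj0 : 2 * (p 0 + p 1) / ((d1 : ℝ) + d2 - 1) - 2 * p 0 / d1 = L 0 * t + M 0 * s := by
      rw [← hs', ← ht']
      linear_combination 2 * p 0 * h00 + p 1 * h01
    have hj1 : 2 * (p 0 + p 1) / ((d1 : ℝ) + d2 - 1) - 2 * p 1 / d2 = L 1 * t + M 1 * s := by
      rw [← hs', ← ht']
      linear_combination 2 * p 1 * h11 + p 0 * h01
    have hk : ∀ a b c : ℝ, (L 0 * a + M 0 * b) * p 0 + (L 1 * a + M 1 * b) * p 1 + c =
        a * s + b * t + c := by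
      intro a b c
      rw [← hs', ← ht']
      ring
    rw [hj0, hj1, hk, hk] at hp
    generalize Real.exp ((d1 - 1) * q 0 + d2 * q 1) = x at *
    generalize Real.exp (d1 * q 0 + (d2 - 1) * q 1) = y at *
    generalize fderiv ℝ f q (Pi.single 0 1) = f0 at *
    generalize fderiv ℝ f q (Pi.single 1 1) = f1 at *
    generalize fderiv ℝ g q (Pi.single 0 1) = g0 at *
    generalize fderiv ℝ g q (Pi.single 1 1) = g1 at *
    generalize fderiv ℝ F0 q (Pi.single 0 1) = k0 at *
    generalize fderiv ℝ F0 q (Pi.single 1 1) = k1 at *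
    have hsum : A1 * x + A2 * y = s * t := by rw [ht, hW]
    rw [← ht]
    linear_combination (-s ^ 2) * hp +
      s ^ 2 * (L 0 * f0 + L 1 * f1 + M 0 * g0 + M 1 * g1) * hsum
  have k1 := key 1 one_ne_zero
  have k2 := key (-1) (by norm_num)
  have k3 := key 2 two_ne_zero
  have k4 := key (-2) (by norm_num)
  have k5 := key 3 three_ne_zero
  refine ⟨by linarith, ?_, by linarith⟩
  refine (mul_eq_zero.1 (?_ : W ^ 2 * _ = 0)).resolve_left (by positivity)
  linarith

lemma hasDerivAt_comp_line {G : (Fin 2 → ℝ) → ℝ} (hG : Differentiable ℝ G) (u w : Fin 2 → ℝ)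
    (t : ℝ) : HasDerivAt (fun t : ℝ => G (u + t • w)) (fderiv ℝ G (u + t • w) w) t := by
  have h : HasDerivAt (fun t : ℝ => u + t • w) w t := by
    simpa using ((hasDerivAt_id t).smul_const w).const_add u
  exact (hG _).hasFDerivAt.comp_hasDerivAt t h

lemma eq_of_fderiv_eq_zero_along {G : (Fin 2 → ℝ) → ℝ} (hG : Differentiable ℝ G)
    {w : Fin 2 → ℝ} (hw : ∀ q, fderiv ℝ G q w = 0) (u : Fin 2 → ℝ) (t : ℝ) :
    G (u + t • w) = G u := by
  have h := is_const_of_deriv_eq_zero (f := fun t : ℝ => G (u + t • w))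
    (fun t => (hasDerivAt_comp_line hG u w t).differentiableAt)
    (fun t => (hasDerivAt_comp_line hG u w t).deriv.trans (hw _)) t 0
  simpa using h

lemma fderiv_eq_of_fderiv_eq_zero_along {G : (Fin 2 → ℝ) → ℝ} (hG : Differentiable ℝ G)
    {w : Fin 2 → ℝ} (hw : ∀ q, fderiv ℝ G q w = 0) (z : Fin 2 → ℝ) (s t : ℝ) :
    fderiv ℝ G (s • z + t • w) z = fderiv ℝ G (s • z) z := by
  have h1 := hasDerivAt_comp_line hG (t • w) z s
  have h2 := hasDerivAt_comp_line hG 0 z s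
  simp only [zero_add] at h2
  simp only [add_comm (t • w), eq_of_fderiv_eq_zero_along hG hw] at h1
  exact h1.unique h2

/-- Dancer–Wang: for `S(q) = A₁e^{−q₁} + A₂e^{−q₂}` with `d₁ ≤ d₂` positive, a nontrivial
first integral linear in momenta exists on `V_H` iff `d₁ = d₂ = 5`. -/
theorem linear_first_integral_iff_five_five
    (d1 d2 : ℕ) (hd1pos : 0 < d1) (hd2pos : 0 < d2) (hle : d1 ≤ d2)
    (A1 A2 : ℝ) (hA1 : 0 < A1) (hA2 : 0 < A2)
    (S : (Fin 2 → ℝ) → ℝ)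
    (hS : S = fun q => A1 * Real.exp (-(q 0)) + A2 * Real.exp (-(q 1))) :
    (∃ F1 F2 F0 : (Fin 2 → ℝ) → ℝ,
      ContDiff ℝ 1 F1 ∧ ContDiff ℝ 1 F2 ∧ ContDiff ℝ 1 F0 ∧
      (F1 ≠ 0 ∨ F2 ≠ 0) ∧
      ∀ q p : Fin 2 → ℝ, Ham d1 d2 S q p = 0 →
        poisson (fun q' p' => F1 q' * p' 0 + F2 q' * p' 1 + F0 q') (Ham d1 d2 S) q p = 0) ↔
    (d1 = 5 ∧ d2 = 5) := by
  subst hS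
  constructor
  · rintro ⟨F1, F2, F0, hF1, hF2, hF0, hne, h⟩
    obtain ⟨L, M, hD, h00, h11, h01⟩ := exists_null_frame hd1pos hd2pos
    obtain ⟨D, hDdef⟩ : ∃ D, D = L 0 * M 1 - L 1 * M 0 := ⟨_, rfl⟩
    have hD' : D ≠ 0 := hDdef ▸ hD
    obtain ⟨f, hfdef⟩ : ∃ f : (Fin 2 → ℝ) → ℝ,
      f = fun q => (F1 q * M 1 - F2 q * M 0) / D := ⟨_, rfl⟩
    obtain ⟨g, hgdef⟩ : ∃ g : (Fin 2 → ℝ) → ℝ,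
      g = fun q => (L 0 * F2 q - L 1 * F1 q) / D := ⟨_, rfl⟩
    have hdF1 := hF1.differentiable one_ne_zero
    have hdF2 := hF2.differentiable one_ne_zero
    have hf : Differentiable ℝ f := by rw [hfdef]; fun_prop
    have hg : Differentiable ℝ g := by rw [hgdef]; fun_prop
    have e1 : F1 = fun q => L 0 * f q + M 0 * g q := by
      funext q; rw [hfdef, hgdef]; field_simp; rw [hDdef]; ring
    have e2 : F2 = fun q => L 1 * f q + M 1 * g q := by
      funext q; rw [hfdef, hgdef]; field_simp; rw [hDdef]; ring
    clear hfdef hgdef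
    subst e1 e2
    have eqs := fun q => null_frame_equations hA1 hA2 hD h00 h11 h01 (hf q) (hg q)
      (hF0.differentiable one_ne_zero q) (h q)
    have hfM := fun q => (eqs q).1
    have hgL := fun q => (eqs q).2.1
    have f_eq := eq_of_fderiv_eq_zero_along hf hfM
    have g_eq := eq_of_fderiv_eq_zero_along hg hgL
    have hd1R : (0 : ℝ) < d1 := by exact_mod_cast hd1pos
    have hd2R : (0 : ℝ) < d2 := by exact_mod_cast hd2pos
    have hd1R' : (1 : ℝ) ≤ d1 := by exact_mod_cast hd1pos
    have hnR : (d1 : ℝ) + d2 - 1 ≠ 0 := by linarith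
    have hαβ : (L 0 - L 1) * (M 0 - M 1) = -(1 / (d1 : ℝ) + 1 / d2) := by
      linear_combination h01 - h00 - h11
    have hαβ0 : (L 0 - L 1) * (M 0 - M 1) ≠ 0 := by
      rw [hαβ]
      have : 0 < 1 / (d1 : ℝ) + 1 / d2 := by positivity
      linarith
    have p11 : ((d1 - 1) * L 0 + d2 * L 1) * ((d1 - 1) * M 0 + d2 * M 1) = 1 - 1 / (d1 : ℝ) := by
      have : ((d1 - 1) * L 0 + d2 * L 1) * ((d1 - 1) * M 0 + d2 * M 1) =
        ((d1 : ℝ) - 1) ^ 2 * (L 0 * M 0) + d2 ^ 2 * (L 1 * M 1) +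
          (d1 - 1) * d2 * (L 0 * M 1 + L 1 * M 0) := by ring
      rw [this, ← h00, ← h11, ← h01]
      field_simp
      ring
    have p22 : (d1 * L 0 + (d2 - 1) * L 1) * (d1 * M 0 + (d2 - 1) * M 1) = 1 - 1 / (d2 : ℝ) := by
      have : (d1 * L 0 + (d2 - 1) * L 1) * (d1 * M 0 + (d2 - 1) * M 1) =
        (d1 : ℝ) ^ 2 * (L 0 * M 0) + (d2 - 1) ^ 2 * (L 1 * M 1) +
          d1 * (d2 - 1) * (L 0 * M 1 + L 1 * M 0) := by ring
      rw [this, ← h00, ← h11, ← h01]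
      field_simp
      ring
    have p12 : ((d1 - 1) * L 0 + d2 * L 1) * (d1 * M 0 + (d2 - 1) * M 1) +
        (d1 * L 0 + (d2 - 1) * L 1) * ((d1 - 1) * M 0 + d2 * M 1) = 2 := by
      have : ((d1 - 1) * L 0 + d2 * L 1) * (d1 * M 0 + (d2 - 1) * M 1) +
        (d1 * L 0 + (d2 - 1) * L 1) * ((d1 - 1) * M 0 + d2 * M 1) =
        2 * ((d1 : ℝ) - 1) * d1 * (L 0 * M 0) + 2 * d2 * (d2 - 1) * (L 1 * M 1) +
          ((d1 - 1) * (d2 - 1) + d1 * d2) * (L 0 * M 1 + L 1 * M 0) := by ring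
      rw [this, ← h00, ← h11, ← h01]
      field_simp
      ring
    have hexp := exponents_of_conformal_symmetry
      (f := fun x => f (x • L)) (g := fun y => g (y • M))
      (f' := fun x => fderiv ℝ f (x • L) L) (g' := fun y => fderiv ℝ g (y • M) M)
      (a1 := (d1 - 1) * L 0 + d2 * L 1) (a2 := d1 * L 0 + (d2 - 1) * L 1)
      (b1 := (d1 - 1) * M 0 + d2 * M 1) (b2 := d1 * M 0 + (d2 - 1) * M 1)
      (fun x => by simpa using hasDerivAt_comp_line hf 0 L x)
      (fun y => by simpa using hasDerivAt_comp_line hg 0 M y) hA1 hA2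
      (fun h0 => hαβ0 (by linear_combination (M 1 - M 0) * h0))
      (fun h0 => hαβ0 (by linear_combination (L 1 - L 0) * h0))
      (fun h0 => by
        have : (L 0 * M 1 - L 1 * M 0) * ((d1 : ℝ) + d2 - 1) = 0 := by
          linear_combination -h0
        exact mul_ne_zero hD hnR this)
      (fun x y => by
        have h3 := (eqs (x • L + y • M)).2.2
        rw [fderiv_eq_of_fderiv_eq_zero_along hf hfM, f_eq, add_comm (x • L),
          fderiv_eq_of_fderiv_eq_zero_along hg hgL, g_eq] at h3
        simp only [Pi.add_apply, Pi.smul_apply, smul_eq_mul] at h3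
        convert h3 using 4 <;> ring_nf)
      (by
        by_contra hcon
        push Not at hcon
        have hdec : ∀ q : Fin 2 → ℝ, ∃ x y : ℝ, q = x • L + y • M := by
          intro q
          refine ⟨(q 0 * M 1 - q 1 * M 0) / D, (L 0 * q 1 - L 1 * q 0) / D, ?_⟩
          ext i
          fin_cases i <;> simp <;> field_simp <;> rw [hDdef] <;> ring
        have hf0 : ∀ q, f q = 0 := by
          intro q
          obtain ⟨x, y, rfl⟩ := hdec q
          rw [f_eq, hcon.1]
        have hg0 : ∀ q, g q = 0 := by
          intro q
          obtain ⟨x, y, rfl⟩ := hdec q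
          rw [add_comm, g_eq, hcon.2]
        rcases hne with hne | hne <;> exact hne (by funext q; simp [hf0, hg0]))
    generalize (d1 - 1) * L 0 + d2 * L 1 = a1 at *
    generalize d1 * L 0 + (d2 - 1) * L 1 = a2 at *
    generalize (d1 - 1) * M 0 + d2 * M 1 = b1 at *
    generalize d1 * M 0 + (d2 - 1) * M 1 = b2 at *
    have hvals : 1 - 1 / (d1 : ℝ) = 4 / 5 ∧ 1 - 1 / (d2 : ℝ) = 4 / 5 := by
      rw [← p11, ← p22]
      rcases hexp with ⟨rfl, rfl⟩ | ⟨rfl, rfl⟩ <;> constructor <;> linarith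
    obtain ⟨v1, v2⟩ := hvals
    field_simp at v1 v2
    constructor
    · have : (d1 : ℝ) = 5 := by linarith
      exact_mod_cast this
    · have : (d2 : ℝ) = 5 := by linarith
      exact_mod_cast this
  · rintro ⟨rfl, rfl⟩
    refine ⟨fun q => 2 * A1 * Real.exp (-(2 * q 0 + q 1)) + A2 * Real.exp (-(q 0 + 2 * q 1)),
      fun q => -A1 * Real.exp (-(2 * q 0 + q 1)) - 2 * A2 * Real.exp (-(q 0 + 2 * q 1)),
      fun _ => 0, by fun_prop, by fun_prop, by fun_prop, Or.inl fun h0 => ?_, fun q p hH => ?_⟩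
    · have h1 := congrFun h0 0
      simp at h1
      linarith
    have hv : vol 5 5 q ≠ 0 := (Real.exp_pos _).ne'
    refine (mul_eq_zero.1 ?_).resolve_left hv
    have c0 : HasFDerivAt (fun q : Fin 2 → ℝ => q 0)
        (ContinuousLinearMap.proj 0 : (Fin 2 → ℝ) →L[ℝ] ℝ) q :=
      (ContinuousLinearMap.proj 0 : (Fin 2 → ℝ) →L[ℝ] ℝ).hasFDerivAt
    have c1 : HasFDerivAt (fun q : Fin 2 → ℝ => q 1)
        (ContinuousLinearMap.proj 1 : (Fin 2 → ℝ) →L[ℝ] ℝ) q :=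
      (ContinuousLinearMap.proj 1 : (Fin 2 → ℝ) →L[ℝ] ℝ).hasFDerivAt
    have E : HasFDerivAt (fun q : Fin 2 → ℝ => Real.exp (-(2 * q 0 + q 1)))
      (Real.exp (-(2 * q 0 + q 1)) • -((2 : ℝ) • (ContinuousLinearMap.proj 0 : (Fin 2 → ℝ) →L[ℝ] ℝ) +
        (ContinuousLinearMap.proj 1 : (Fin 2 → ℝ) →L[ℝ] ℝ))) q :=
      ((c0.const_mul 2).add c1).neg.exp
    have G : HasFDerivAt (fun q : Fin 2 → ℝ => Real.exp (-(q 0 + 2 * q 1)))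
      (Real.exp (-(q 0 + 2 * q 1)) • -((ContinuousLinearMap.proj 0 : (Fin 2 → ℝ) →L[ℝ] ℝ) +
        (2 : ℝ) • (ContinuousLinearMap.proj 1 : (Fin 2 → ℝ) →L[ℝ] ℝ))) q :=
      (c0.add (c1.const_mul 2)).neg.exp
    have D1 : HasFDerivAt (fun q : Fin 2 → ℝ => 2 * A1 * Real.exp (-(2 * q 0 + q 1)) +
      A2 * Real.exp (-(q 0 + 2 * q 1))) _ q := (E.const_mul (2 * A1)).add (G.const_mul A2)
    have D2 : HasFDerivAt (fun q : Fin 2 → ℝ => -A1 * Real.exp (-(2 * q 0 + q 1)) -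
      2 * A2 * Real.exp (-(q 0 + 2 * q 1))) _ q := (E.const_mul (-A1)).sub (G.const_mul (2 * A2))
    refine (vol_mul_poisson_linear 5 5 A1 A2 p D1.differentiableAt D2.differentiableAt
      (differentiableAt_const 0) hH).trans ?_
    rw [D1.fderiv, D2.fderiv]
    have x1 : Real.exp (((5 : ℕ) - 1) * q 0 + (5 : ℕ) * q 1) =
        Real.exp (3 * (q 0 + q 1)) * Real.exp (q 0 + 2 * q 1) := by
      rw [← Real.exp_add]; congr 1; push_cast; ring
    have x2 : Real.exp ((5 : ℕ) * q 0 + ((5 : ℕ) - 1) * q 1) =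
        Real.exp (3 * (q 0 + q 1)) * Real.exp (2 * q 0 + q 1) := by
      rw [← Real.exp_add]; congr 1; push_cast; ring
    have hJ : 1 / 9 * (p 0 + p 1) ^ 2 - p 0 ^ 2 / 5 - p 1 ^ 2 / 5 =
        A1 * (Real.exp (3 * (q 0 + q 1)) * Real.exp (q 0 + 2 * q 1)) +
        A2 * (Real.exp (3 * (q 0 + q 1)) * Real.exp (2 * q 0 + q 1)) := by
      have y1 : Real.exp (3 * (q 0 + q 1)) * Real.exp (q 0 + 2 * q 1) =
          vol 5 5 q ^ 2 * Real.exp (-(q 0)) := by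
        rw [vol, ← Real.exp_nat_mul, ← Real.exp_add, ← Real.exp_add]; congr 1; push_cast; ring
      have y2 : Real.exp (3 * (q 0 + q 1)) * Real.exp (2 * q 0 + q 1) =
          vol 5 5 q ^ 2 * Real.exp (-(q 1)) := by
        rw [vol, ← Real.exp_nat_mul, ← Real.exp_add, ← Real.exp_add]; congr 1; push_cast; ring
      have hJ' : Jform 5 5 p = 1 / 9 * (p 0 + p 1) ^ 2 - p 0 ^ 2 / 5 - p 1 ^ 2 / 5 := by
        norm_num [Jform]
      rw [y1, y2, ← hJ']
      rw [Ham] at hH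
      field_simp at hH
      linear_combination hH
    have z1 : Real.exp (-(2 * q 0 + q 1)) * Real.exp (2 * q 0 + q 1) = 1 := by
      rw [← Real.exp_add, neg_add_cancel, Real.exp_zero]
    have z2 : Real.exp (-(q 0 + 2 * q 1)) * Real.exp (q 0 + 2 * q 1) = 1 := by
      rw [← Real.exp_add, neg_add_cancel, Real.exp_zero]
    rw [x1, x2]
    clear E G D1 D2 x1 x2 hH
    generalize Real.exp (-(2 * q 0 + q 1)) = e1 at *
    generalize Real.exp (-(q 0 + 2 * q 1)) = e2 at *
    generalize Real.exp (2 * q 0 + q 1) = x at *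
    generalize Real.exp (q 0 + 2 * q 1) = y at *
    generalize Real.exp (3 * (q 0 + q 1)) = k at *
    simp
    linear_combination (-3 * (A1 * e1 - A2 * e2)) * hJ + 3 * A1 * A2 * k * (z1 - z2)
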